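/- Let p be a prime number with p ≡ 1 (mod 6). Then there exist integers a and b with a² − a·b + b² = p. -/

import Mathlib

theorem eisenstein_norm_of_prime_mod_six (p : ℕ) (hp : p.Prime) (h : p % 6 = 1) :
    ∃ a b : ℤ, a ^ 2 - a * b + b ^ 2 = (p : ℤ) := by
  have : Fact p.Prime := ⟨hp⟩
  have : Fact (Nat.Prime 3) := ⟨Nat.prime_three⟩
  obtain ⟨w, hw⟩ : ∃ w : ZMod p, w ^ 2 + w + 1 = 0 := by
    have hd : 3 ∣ Fintype.card (ZMod p)ˣ := by
      rw [ZMod.card_units p]; omega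
    obtain ⟨u, hu⟩ := exists_prime_orderOf_dvd_card 3 hd
    refine ⟨(u : ZMod p), ?_⟩
    have h3 : (u : ZMod p) ^ 3 = 1 := by
      have := pow_orderOf_eq_one u
      rw [hu] at this
      simpa using congrArg Units.val this
    have h1 : (u : ZMod p) - 1 ≠ 0 := by
      intro h0
      have : u = 1 := Units.ext (by simpa [sub_eq_zero] using h0)
      rw [this, orderOf_one] at hu
      omega
    apply mul_left_cancel₀ h1
    linear_combination h3
  set s := Nat.sqrt p with hs
  have hs1 : p < (s + 1) * (s + 1) := Nat.lt_succ_sqrt p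
  have hs2 : s * s ≤ p := Nat.sqrt_le p
  have hs3 : s * s ≠ p := fun e => by
    have h1 : s = 1 ∨ s = p := hp.eq_one_or_self_of_dvd s ⟨s, e.symm⟩
    have h2 := hp.two_le
    rcases h1 with h1 | h1
    · rw [h1] at e
      omega
    · rw [h1] at e
      nlinarith
  have hs4 : ((s : ℤ)) ^ 2 < p := by
    have : s * s < p := lt_of_le_of_ne hs2 hs3
    rw [sq]; exact_mod_cast this
  let f : Fin (s + 1) × Fin (s + 1) → ZMod p := fun q => ((q.1 : ℕ) : ZMod p) - w * ((q.2 : ℕ) : ZMod p)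
  obtain ⟨⟨a, b⟩, ⟨c, d⟩, hne, hf⟩ : ∃ q r, q ≠ r ∧ f q = f r := by
    apply Fintype.exists_ne_map_eq_of_card_lt f
    simpa [ZMod.card] using hs1
  simp only [f] at hf
  obtain ⟨x, hx⟩ : ∃ x : ℤ, x = (a : ℕ) - (c : ℕ) := ⟨_, rfl⟩
  obtain ⟨y, hy⟩ : ∃ y : ℤ, y = (b : ℕ) - (d : ℕ) := ⟨_, rfl⟩
  have ha := a.2
  have hb := b.2
  have hc := c.2
  have hd := d.2
  have hxy : ¬ (x = 0 ∧ y = 0) := by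
    rintro ⟨h1, h2⟩
    apply hne
    ext <;> simp only <;> omega
  have hx2 : x ^ 2 < p := lt_of_le_of_lt (sq_le_sq' (by omega) (by omega)) hs4
  have hy2 : y ^ 2 < p := lt_of_le_of_lt (sq_le_sq' (by omega) (by omega)) hs4
  have hdvd : (p : ℤ) ∣ x ^ 2 + x * y + y ^ 2 := by
    rw [← ZMod.intCast_zmod_eq_zero_iff_dvd]
    have e : (x : ZMod p) = w * (y : ZMod p) := by
      rw [hx, hy]; push_cast; linear_combination hf
    push_cast
    rw [e]
    linear_combination (y : ZMod p) ^ 2 * hw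
  obtain ⟨k, hk⟩ := hdvd
  have hp0 : (0 : ℤ) < p := by exact_mod_cast hp.pos
  have hpos : 0 < x ^ 2 + x * y + y ^ 2 := by
    rcases eq_or_ne y 0 with h0 | h0
    · have : x ≠ 0 := fun e => hxy ⟨e, h0⟩
      subst h0
      have : 0 < x ^ 2 := by positivity
      linarith
    · have : 0 < y ^ 2 := by positivity
      nlinarith [sq_nonneg (2 * x + y)]
  have hk0 : 0 < k := by
    rw [hk] at hpos
    exact pos_of_mul_pos_right hpos hp0.le
  have hk3 : k < 3 := by
    have : (p : ℤ) * k < p * 3 := by nlinarith [sq_nonneg (x - y)]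
    exact lt_of_mul_lt_mul_left this hp0.le
  have hk12 : k = 1 ∨ k = 2 := by omega
  rcases hk12 with rfl | rfl
  · exact ⟨x, -y, by linarith⟩
  · exfalso
    rcases Int.even_or_odd' x with ⟨m, rfl | rfl⟩ <;> rcases Int.even_or_odd' y with ⟨n, rfl | rfl⟩ <;> ring_nf at hk <;> omega
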